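/- There exists an absolute constant C > 0 such that the following holds. Let m ≥ 2, Q ≥ 2, n ≥ 1, t ≥ 1 be integers and let 1 ≤ j ≤ m. Suppose B ⊆ (0, 1/m) ∩ Q_{≤Q} satisfies |B ∩ Q_{=q}| ≤ n for every 1 ≤ q ≤ Q. For each integer i ≥ 0 and rational x, let r_i(x) denote the number of tuples (b_1, ..., b_i) ∈ B^i with b_1 + ... + b_i = x (so r_0(x) = 1 if x = 0 and 0 otherwise). Then, summing over all rationals written in lowest terms as c/q, we have Σ' τ₃(q)^{2t} · r_j(c/q)² ≤ C · (m·log Q)³ · Q·n · M_log(τ₃^{2t+2}; Q) · Σ' τ₃(q)^{2t+2} · r_{j−1}(c/q)². -/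

import Mathlib

/-- The set of reduced rationals `a/q ∈ [0,1]` with `1 ≤ a ≤ q` and `gcd(a,q) = 1`. -/
def Qeq (q : ℕ) : Finset ℚ :=
  ((Finset.Icc 1 q).filter fun a => Nat.gcd a q = 1).image fun a : ℕ => (a : ℚ) / (q : ℚ)

/-- The set of rationals in `[0,1]` with denominator at most `Q`. -/
def Qle (Q : ℕ) : Finset ℚ := (Finset.Icc 1 Q).biUnion Qeq

/-- The ternary divisor function `τ₃(n) = #{(a,b,c) ∈ ℕ³ : abc = n}`. -/
def tau3 (n : ℕ) : ℕ :=
  ((Finset.Icc 1 n ×ˢ Finset.Icc 1 n ×ˢ Finset.Icc 1 n).filter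
    fun p => p.1 * p.2.1 * p.2.2 = n).card

/-- The logarithmic maximal average `M_log(ω; X) = max_{2 ≤ x ≤ X} (1/log x) ∑_{n ≤ x} ω(n)/n`. -/
noncomputable def MlogAvg (w : ℕ → ℝ) (X : ℕ) : ℝ :=
  ⨆ x ∈ Finset.Icc 2 X, (∑ n ∈ Finset.Icc 1 x, w n / (n : ℝ)) / Real.log x

/-- `rB B i x` is the number of `i`-tuples `(b₁, …, bᵢ) ∈ B^i` with `b₁ + ⋯ + bᵢ = x`. -/
def rB (B : Finset ℚ) (i : ℕ) (x : ℚ) : ℕ :=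
  ((Fintype.piFinset fun _ : Fin i => B).filter fun f => (∑ j, f j) = x).card

/-!
Splitting off the last summand turns the theorem into a weighted `ℓ²` bound for the convolution
`x ↦ ∑ b ∈ B, f (x - b)`. Put `y = x - b`. Each of the denominators of `x`, `y` and `b` divides the
least common multiple of the other two, so they are `αβg`, `βγg` and `αγg` with `g` their greatest
common divisor. For a fixed `x` the pair of denominators of `y` and `b` is thus determined by a
factorisation of `x.den` into three and by `γ ≤ Q`, and Cauchy–Schwarz over these pairs with
weights `1 / γ` costs `τ₃(x.den) ∑ 1 / γ`. In the other direction fix `y` and the three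
denominators: elements `b` of `B` that lead to the same pair `(x - b', b')` of denominators differ
by multiples of `1 / g` and lie in an interval of length one, so there are at most `g` of them
for each of the at most `n` choices of `b'`. The factor `γg = b.den / α ≤ Q / α` then leaves the sum
`τ₃(y.den) ∑ 1 / α`, and submultiplicativity of the weight accounts for the change of denominator
from `y` to `x`.
-/

open Finset Function

/-- The ordered factorisations `(a, b, c)` of `n`, the set counted by `tau3 n`. -/
def factorTriples (n : ℕ) : Finset (ℕ × ℕ × ℕ) :=
  {p ∈ Icc 1 n ×ˢ Icc 1 n ×ˢ Icc 1 n | p.1 * p.2.1 * p.2.2 = n}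

theorem card_factorTriples (n : ℕ) : #(factorTriples n) = tau3 n := rfl

theorem mem_factorTriples {n : ℕ} {p : ℕ × ℕ × ℕ} :
    p ∈ factorTriples n ↔ p.1 * p.2.1 * p.2.2 = n ∧ n ≠ 0 := by
  obtain ⟨a, b, c⟩ := p
  simp only [factorTriples, mem_filter, mem_product, mem_Icc]
  constructor
  · rintro ⟨⟨ha, -⟩, h⟩
    exact ⟨h, by lia⟩
  · rintro ⟨rfl, h⟩
    have ha : a ∣ a * b * c := ⟨b * c, mul_assoc a b c⟩
    have hb : b ∣ a * b * c := (dvd_mul_left b a).mul_right c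
    have hc : c ∣ a * b * c := dvd_mul_left c (a * b)
    have bounds {d : ℕ} (hd : d ∣ a * b * c) : 1 ≤ d ∧ d ≤ a * b * c :=
      ⟨Nat.pos_of_dvd_of_pos hd (Nat.pos_of_ne_zero h), Nat.le_of_dvd (Nat.pos_of_ne_zero h) hd⟩
    exact ⟨⟨bounds ha, bounds hb, bounds hc⟩, rfl⟩

theorem one_le_tau3 {n : ℕ} (hn : n ≠ 0) : 1 ≤ tau3 n := by
  rw [← card_factorTriples, one_le_card]
  exact ⟨(n, 1, 1), mem_factorTriples.mpr ⟨by simp, hn⟩⟩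

theorem tau3_mul_le (a b : ℕ) : tau3 (a * b) ≤ tau3 a * tau3 b := by
  simp only [← card_factorTriples]
  rw [← card_product]
  refine card_le_card_of_surjOn
    (fun p ↦ (p.1.1 * p.2.1, p.1.2.1 * p.2.2.1, p.1.2.2 * p.2.2.2)) ?_
  rintro ⟨x, y, z⟩ h
  obtain ⟨h, h0⟩ := mem_factorTriples.mp h
  obtain ⟨ha, hb⟩ := mul_ne_zero_iff.mp h0
  obtain ⟨u, z₁, hu, ⟨z₂, rfl⟩, rfl⟩ := exists_dvd_and_dvd_of_dvd_mul (Dvd.intro b h.symm)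
  obtain ⟨x₁, y₁, ⟨x₂, rfl⟩, ⟨y₂, rfl⟩, rfl⟩ := exists_dvd_and_dvd_of_dvd_mul hu
  refine ⟨((x₁, y₁, z₁), (x₂, y₂, z₂)), ?_, rfl⟩
  rw [mem_coe, mem_product, mem_factorTriples, mem_factorTriples]
  refine ⟨⟨rfl, ha⟩, Nat.eq_of_mul_eq_mul_left (Nat.pos_of_ne_zero ha) ?_, hb⟩
  rw [← h]
  ring

theorem tau3_le_of_dvd {a b : ℕ} (hb : b ≠ 0) (h : a ∣ b) : tau3 a ≤ tau3 b := by
  obtain ⟨c, rfl⟩ := h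
  have hc := right_ne_zero_of_mul hb
  refine card_le_card_of_injOn (fun p ↦ (p.1, p.2.1, p.2.2 * c)) (fun p hp ↦ ?_) ?_
  · obtain ⟨hp, -⟩ := mem_factorTriples.mp hp
    exact mem_factorTriples.mpr ⟨by rw [← mul_assoc, hp], hb⟩
  · rintro ⟨x, y, z⟩ - ⟨x', y', z'⟩ - h
    simpa [hc] using h

/-- Nonnegative weights that are submultiplicative and monotone along divisibility, such as the
powers of `tau3`. These are the properties through which a weight on denominators enters the
convolution inequality. Monotonicity is required below nonzero numbers only, as `tau3 0 = 0`. -/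
structure IsDivisorWeight (w : ℕ → ℝ) : Prop where
  nonneg (a : ℕ) : 0 ≤ w a
  mul_le (a b : ℕ) : w (a * b) ≤ w a * w b
  le_of_dvd {a b : ℕ} (hb : b ≠ 0) (h : a ∣ b) : w a ≤ w b

theorem isDivisorWeight_tau3 : IsDivisorWeight fun a ↦ (tau3 a : ℝ) where
  nonneg _ := Nat.cast_nonneg _
  mul_le a b := by exact_mod_cast tau3_mul_le a b
  le_of_dvd hb h := by exact_mod_cast tau3_le_of_dvd hb h

theorem IsDivisorWeight.mul {v w : ℕ → ℝ} (hv : IsDivisorWeight v) (hw : IsDivisorWeight w) :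
    IsDivisorWeight fun a ↦ v a * w a where
  nonneg a := mul_nonneg (hv.nonneg a) (hw.nonneg a)
  mul_le a b := (mul_le_mul (hv.mul_le a b) (hw.mul_le a b) (hw.nonneg _)
    (mul_nonneg (hv.nonneg a) (hv.nonneg b))).trans_eq (mul_mul_mul_comm ..)
  le_of_dvd hb h := mul_le_mul (hv.le_of_dvd hb h) (hw.le_of_dvd hb h) (hw.nonneg _) (hv.nonneg _)

theorem IsDivisorWeight.pow {w : ℕ → ℝ} (hw : IsDivisorWeight w) (s : ℕ) :
    IsDivisorWeight fun a ↦ w a ^ s where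
  nonneg a := pow_nonneg (hw.nonneg a) s
  mul_le a b := (pow_le_pow_left₀ (hw.nonneg _) (hw.mul_le a b) s).trans_eq (mul_pow ..)
  le_of_dvd hb h := pow_le_pow_left₀ (hw.nonneg _) (hw.le_of_dvd hb h) s

/-- The cofactor of `gcd(q, r, s)` in `gcd(q, r)`. If each of `q`, `r`, `s` divides the least
common multiple of the other two, then each is `gcd(q, r, s)` times its two cofactors. -/
def gcdCofactor (q r s : ℕ) : ℕ := q.gcd r / (q.gcd r).gcd s

theorem gcdCofactor_comm (q r s : ℕ) : gcdCofactor q r s = gcdCofactor r q s := by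
  rw [gcdCofactor, gcdCofactor, Nat.gcd_comm q r]

theorem gcdCofactor_pos {q : ℕ} (hq : q ≠ 0) (r s : ℕ) : 0 < gcdCofactor q r s :=
  Nat.div_pos (Nat.gcd_le_left _ (Nat.gcd_pos_of_pos_left _ (Nat.pos_of_ne_zero hq)))
    (Nat.gcd_pos_of_pos_left _ (Nat.gcd_pos_of_pos_left _ (Nat.pos_of_ne_zero hq)))

theorem gcdCofactor_mul_gcd (q r s : ℕ) :
    gcdCofactor q r s * (q.gcd r).gcd s = q.gcd r :=
  Nat.div_mul_cancel (Nat.gcd_dvd_left _ _)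

theorem gcd_mul_gcd_of_dvd_lcm {q r s : ℕ} (h : q ∣ r.lcm s) :
    q.gcd r * q.gcd s = q * (q.gcd r).gcd s := by
  apply Nat.dvd_antisymm
  · rw [← Nat.gcd_mul_left q (q.gcd r), ← Nat.gcd_mul_left q q, Nat.dvd_gcd_iff, Nat.dvd_gcd_iff]
    refine ⟨⟨?_, ?_⟩, ?_⟩
    · exact mul_dvd_mul (Nat.gcd_dvd_left _ _) (Nat.gcd_dvd_left _ _)
    · rw [mul_comm q r]
      exact mul_dvd_mul (Nat.gcd_dvd_right _ _) (Nat.gcd_dvd_left _ _)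
    · exact mul_dvd_mul (Nat.gcd_dvd_left _ _) (Nat.gcd_dvd_right _ _)
  · have hrs : q * (q.gcd r).gcd s ∣ r * s := by
      rw [← Nat.gcd_mul_lcm r s, mul_comm (r.gcd s)]
      exact mul_dvd_mul h (Nat.gcd_dvd_gcd_of_dvd_left _ (Nat.gcd_dvd_right _ _))
    rw [← Nat.gcd_mul_left (q.gcd r), ← Nat.gcd_mul_right q s, Nat.dvd_gcd_iff, Nat.dvd_gcd_iff]
    refine ⟨?_, mul_dvd_mul_left q (Nat.gcd_dvd_right _ _), hrs⟩
    rw [mul_comm _ q]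
    exact mul_dvd_mul_left q (Nat.gcd_dvd_left _ _)

theorem gcdCofactor_mul_gcdCofactor_mul_gcd {q r s : ℕ} (h : q ∣ r.lcm s) :
    gcdCofactor q r s * gcdCofactor q s r * (q.gcd r).gcd s = q := by
  rcases Nat.eq_zero_or_pos ((q.gcd r).gcd s) with h0 | h0
  · rw [h0, mul_zero, (Nat.gcd_eq_zero_iff.mp (Nat.gcd_eq_zero_iff.mp h0).1).1]
  have hr := gcdCofactor_mul_gcd q r s
  have hs := gcdCofactor_mul_gcd q s r
  rw [Nat.gcd_right_comm] at hs
  refine Nat.eq_of_mul_eq_mul_right h0 ?_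
  calc gcdCofactor q r s * gcdCofactor q s r * (q.gcd r).gcd s * (q.gcd r).gcd s
      = gcdCofactor q r s * (q.gcd r).gcd s * (gcdCofactor q s r * (q.gcd r).gcd s) := by ring
    _ = q * (q.gcd r).gcd s := by rw [hr, hs, gcd_mul_gcd_of_dvd_lcm h]

/-- Each of `q`, `r`, `s` divides the least common multiple of the other two. This is how the
denominators of `x`, `x - b` and `b` are related: the two largest of their `p`-adic valuations
agree for each prime `p`. -/
structure LcmTriangle (q r s : ℕ) : Prop where
  dvd_fst : q ∣ r.lcm s
  dvd_snd : r ∣ q.lcm s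
  dvd_trd : s ∣ q.lcm r

theorem lcmTriangle_den (x b : ℚ) : LcmTriangle x.den (x - b).den b.den where
  dvd_fst := by simpa using Rat.add_den_dvd_lcm (x - b) b
  dvd_snd := Rat.sub_den_dvd_lcm x b
  dvd_trd := by simpa using Rat.sub_den_dvd_lcm x (x - b)

namespace LcmTriangle

variable {q r s : ℕ}

theorem swap (h : LcmTriangle q r s) : LcmTriangle r q s :=
  ⟨h.dvd_snd, h.dvd_fst, Nat.lcm_comm q r ▸ h.dvd_trd⟩

theorem fst_eq (h : LcmTriangle q r s) :
    gcdCofactor q r s * gcdCofactor q s r * (q.gcd r).gcd s = q :=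
  gcdCofactor_mul_gcdCofactor_mul_gcd h.dvd_fst

theorem snd_eq (h : LcmTriangle q r s) :
    gcdCofactor q r s * gcdCofactor r s q * (q.gcd r).gcd s = r := by
  rw [gcdCofactor_comm q r, Nat.gcd_comm q r]
  exact h.swap.fst_eq

theorem trd_eq (h : LcmTriangle q r s) :
    gcdCofactor q s r * gcdCofactor r s q * (q.gcd r).gcd s = s := by
  rw [gcdCofactor_comm q s, gcdCofactor_comm r s, Nat.gcd_comm _ s, ← Nat.gcd_assoc]
  exact gcdCofactor_mul_gcdCofactor_mul_gcd h.dvd_trd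

end LcmTriangle

/-- A triangle with first entry `q` is determined by the factorisation of `q` into its two cofactors
and the common divisor, and by the remaining cofactor. -/
theorem sum_gcdCofactor_le {q Q : ℕ} (hq : q ≠ 0) {K : Finset (ℕ × ℕ)}
    (hK : ∀ p ∈ K, LcmTriangle q p.1 p.2) (hKQ : ∀ p ∈ K, p.2 ∈ Icc 1 Q)
    {F : ℕ → ℝ} (hF : ∀ c, 0 ≤ F c) :
    ∑ p ∈ K, F (gcdCofactor p.1 p.2 q) ≤ tau3 q * ∑ c ∈ Icc 1 Q, F c := by
  let e : ℕ × ℕ → (ℕ × ℕ × ℕ) × ℕ := fun p ↦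
    ((gcdCofactor q p.1 p.2, gcdCofactor q p.2 p.1, (q.gcd p.1).gcd p.2), gcdCofactor p.1 p.2 q)
  have e_mem : ∀ p ∈ K, e p ∈ factorTriples q ×ˢ Icc 1 Q := by
    intro p hp
    obtain ⟨h1, h2⟩ := mem_Icc.mp (hKQ p hp)
    have hdvd : gcdCofactor p.1 p.2 q ∣ p.2 :=
      (Dvd.intro _ (gcdCofactor_mul_gcd ..)).trans (Nat.gcd_dvd_right _ _)
    exact mem_product.mpr ⟨mem_factorTriples.mpr ⟨(hK p hp).fst_eq, hq⟩,
      mem_Icc.mpr ⟨Nat.pos_of_dvd_of_pos hdvd h1, (Nat.le_of_dvd h1 hdvd).trans h2⟩⟩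
  have e_inj : Set.InjOn e K := by
    intro p hp p' hp' h
    simp only [e, Prod.mk.injEq] at h
    obtain ⟨⟨hβ, hα, hg⟩, hγ⟩ := h
    apply Prod.ext
    · rw [← (hK p hp).snd_eq, ← (hK p' hp').snd_eq, hβ, hγ, hg]
    · rw [← (hK p hp).trd_eq, ← (hK p' hp').trd_eq, hα, hγ, hg]
  calc ∑ p ∈ K, F (gcdCofactor p.1 p.2 q)
      = ∑ t ∈ K.image e, F t.2 := (sum_image (f := fun t ↦ F t.2) e_inj).symm
    _ ≤ ∑ t ∈ factorTriples q ×ˢ Icc 1 Q, F t.2 :=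
        sum_le_sum_of_subset_of_nonneg (image_subset_iff.mpr e_mem) fun t _ _ ↦ hF t.2
    _ = tau3 q * ∑ c ∈ Icc 1 Q, F c := by
        simp only [sum_product, sum_const, card_factorTriples, nsmul_eq_mul]

theorem card_le_of_den_sub_dvd {S : Finset ℚ} {g : ℕ} (hg : g ≠ 0)
    (hS : ∀ b ∈ S, ∀ b' ∈ S, |b - b'| < 1) (hd : ∀ b ∈ S, ∀ b' ∈ S, (b - b').den ∣ g) :
    #S ≤ g := by
  have : NeZero g := ⟨hg⟩
  have hg0 : (0 : ℚ) < g := by positivity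
  rw [← ZMod.card g, ← Finset.card_univ]
  refine card_le_card_of_injOn (fun b ↦ (⌊b * g⌋ : ZMod g)) (fun _ _ ↦ mem_univ _) ?_
  intro b hb b' hb' h
  obtain ⟨k, hk⟩ : ∃ k : ℤ, (b - b') * g = k := by
    obtain ⟨c, hc⟩ := hd b hb b' hb'
    exact ⟨(b - b').num * c, by rw [hc, Nat.cast_mul, ← mul_assoc, Rat.mul_den_eq_num]; simp⟩
  have hfloor : ⌊b * g⌋ = ⌊b' * g⌋ + k := by
    rw [← Int.floor_add_intCast, ← hk]
    ring_nf
  have hgk : (g : ℤ) ∣ k := by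
    rw [← ZMod.intCast_zmod_eq_zero_iff_dvd]
    simpa [hfloor] using h
  have hk0 : k = 0 := by
    refine Int.eq_zero_of_abs_lt_dvd hgk ?_
    have : |(k : ℚ)| < g := by
      rw [← hk, abs_mul, abs_of_pos hg0]
      exact mul_lt_of_lt_one_left hg0 (hS b hb b' hb')
    exact_mod_cast this
  simpa [hk0, hg, sub_eq_zero] using hk

theorem sq_sum_le_sum_card_fiber {ι κ R : Type*} [DecidableEq κ] [Field R] [LinearOrder R]
    [IsStrictOrderedRing R] (s : Finset ι) (k : ι → κ) (u : ι → R) {c : κ → R}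
    (hc : ∀ i ∈ s, 0 < c (k i)) :
    (∑ i ∈ s, u i) ^ 2 ≤
      (∑ t ∈ s.image k, 1 / c t) * ∑ i ∈ s, c (k i) * #{j ∈ s | k j = k i} * u i ^ 2 := by
  have hc' : ∀ t ∈ s.image k, 0 < c t := by simpa using hc
  have hk : ∀ i ∈ s, k i ∈ s.image k := fun i ↦ mem_image_of_mem k
  rw [← sum_fiberwise_of_maps_to hk, ← sum_fiberwise_of_maps_to hk fun i ↦ _ * u i ^ 2]
  refine sum_sq_le_sum_mul_sum_of_sq_le_mul _ (fun t ht ↦ (one_div_pos.mpr (hc' t ht)).le)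
    (fun t _ ↦ sum_nonneg fun i hi ↦ ?_) fun t ht ↦ ?_
  · have := hc i (mem_filter.mp hi).1
    positivity
  calc (∑ i ∈ s with k i = t, u i) ^ 2
      ≤ #{i ∈ s | k i = t} * ∑ i ∈ s with k i = t, u i ^ 2 := sq_sum_le_card_mul_sum_sq
    _ = 1 / c t * ∑ i ∈ s with k i = t, c (k i) * #{j ∈ s | k j = k i} * u i ^ 2 := by
        have := (hc' t ht).ne'
        rw [mul_sum, mul_sum]
        refine sum_congr rfl fun i hi ↦ ?_
        rw [(mem_filter.mp hi).2]
        field_simp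

theorem finsum_sum_comp_sub {A M : Type*} [AddGroup A] [AddCommMonoid M] (B : Finset A)
    {G : A → A → M} (hG : ∀ b ∈ B, HasFiniteSupport fun y ↦ G y b) :
    ∑ᶠ x, ∑ b ∈ B, G (x - b) b = ∑ᶠ y, ∑ b ∈ B, G y b := by
  rw [finsum_sum_comm, finsum_sum_comm]
  · exact sum_congr rfl fun b _ ↦ finsum_comp_equiv (f := fun y ↦ G y b) (Equiv.subRight b)
  · exact hG
  · exact fun b hb ↦ (hG b hb).fun_comp_of_injective sub_left_injective

section Convolution

variable {B : Finset ℚ} {Q n : ℕ} {w : ℕ → ℝ}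

/-- The denominators of the two terms in the decomposition `x = (x - b) + b`. The convolution at
`x` is split according to them. -/
def denPair (x b : ℚ) : ℕ × ℕ := ((x - b).den, b.den)

theorem sq_sum_sub_le_sum_card_denPair (hden : ∀ b ∈ B, b.den ≤ Q) (f : ℚ → ℝ) (x : ℚ) :
    (∑ b ∈ B, f (x - b)) ^ 2 ≤ (tau3 x.den * ∑ c ∈ Icc 1 Q, 1 / (c : ℝ)) *
      ∑ b ∈ B, gcdCofactor (x - b).den b.den x.den *
        #{b' ∈ B | denPair x b' = denPair x b} * f (x - b) ^ 2 := by
  refine (sq_sum_le_sum_card_fiber B (denPair x) (fun b ↦ f (x - b))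
    (c := fun p ↦ gcdCofactor p.1 p.2 x.den) fun b _ ↦ ?_).trans ?_
  · exact Nat.cast_pos.mpr (gcdCofactor_pos (x - b).den_nz _ _)
  · refine mul_le_mul_of_nonneg_right ?_ (sum_nonneg fun b _ ↦ by positivity)
    refine sum_gcdCofactor_le (F := fun c ↦ 1 / (c : ℝ)) x.den_nz ?_ ?_ fun c ↦ by positivity
    · simpa [denPair] using fun b _ ↦ lcmTriangle_den x b
    · simpa [denPair, Nat.one_le_iff_ne_zero] using hden

theorem sum_card_denPair_le (hB : ∀ b ∈ B, ∀ b' ∈ B, |b - b'| < 1)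
    (hn : ∀ d, #{b ∈ B | b.den = d} ≤ n) (y : ℚ) (q d : ℕ) :
    ∑ b ∈ B with ((y + b).den, b.den) = (q, d), #{b' ∈ B | denPair (y + b) b' = (y.den, d)} ≤
      n * (y.den.gcd q).gcd d := by
  set S := {b ∈ B | ((y + b).den, b.den) = (q, d)} with hS
  have card_column (b' : ℚ) : #{b ∈ S | (y + b - b').den = y.den} ≤ (y.den.gcd q).gcd d := by
    refine card_le_of_den_sub_dvd (Nat.gcd_ne_zero_left (Nat.gcd_ne_zero_left y.den_nz)) ?_ ?_
    · intro b₁ h₁ b₂ h₂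
      simp only [hS, mem_filter] at h₁ h₂
      exact hB b₁ h₁.1.1 b₂ h₂.1.1
    · intro b₁ h₁ b₂ h₂
      simp only [hS, mem_filter, Prod.mk.injEq] at h₁ h₂
      obtain ⟨⟨-, hq₁, hd₁⟩, hy₁⟩ := h₁
      obtain ⟨⟨-, hq₂, hd₂⟩, hy₂⟩ := h₂
      refine Nat.dvd_gcd (Nat.dvd_gcd ?_ ?_) ?_
      · simpa [hy₁, hy₂] using Rat.sub_den_dvd_lcm (y + b₁ - b') (y + b₂ - b')
      · simpa [hq₁, hq₂] using Rat.sub_den_dvd_lcm (y + b₁) (y + b₂)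
      · simpa [hd₁, hd₂] using Rat.sub_den_dvd_lcm b₁ b₂
  calc ∑ b ∈ S, #{b' ∈ B | denPair (y + b) b' = (y.den, d)}
      = ∑ b ∈ S, #{b' ∈ {b' ∈ B | b'.den = d} | (y + b - b').den = y.den} := by
        simp only [filter_filter, denPair, Prod.mk.injEq, and_comm]
    _ = ∑ b' ∈ B with b'.den = d, #{b ∈ S | (y + b - b').den = y.den} :=
        sum_card_bipartiteAbove_eq_sum_card_bipartiteBelow _
    _ ≤ #{b' ∈ B | b'.den = d} * (y.den.gcd q).gcd d :=
        sum_le_card_nsmul _ _ _ fun b' _ ↦ card_column b'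
    _ ≤ n * (y.den.gcd q).gcd d := Nat.mul_le_mul_right _ (hn d)

theorem weight_mul_gcdCofactor_mul_gcd_le (hw : IsDivisorWeight w) {r q d : ℕ}
    (h : LcmTriangle r q d) (hr : r ≠ 0) (hq : q ≠ 0) :
    w q * (gcdCofactor r d q * (r.gcd q).gcd d) ≤
      d * w r * (w (gcdCofactor q d r) / gcdCofactor q d r) := by
  have hα : (0 : ℝ) < gcdCofactor q d r := Nat.cast_pos.mpr (gcdCofactor_pos hq _ _)
  have hw_q : w q ≤ w (gcdCofactor q d r) * w r :=
    calc w q = w (gcdCofactor q d r * (gcdCofactor r q d * (r.gcd q).gcd d)) := by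
          rw [mul_left_comm, ← mul_assoc, h.snd_eq]
      _ ≤ w (gcdCofactor q d r) * w (gcdCofactor r q d * (r.gcd q).gcd d) := hw.mul_le _ _
      _ ≤ w (gcdCofactor q d r) * w r :=
          mul_le_mul_of_nonneg_left
            (hw.le_of_dvd hr (by rw [gcdCofactor_mul_gcd]; exact Nat.gcd_dvd_left r q))
            (hw.nonneg _)
  have hd : (gcdCofactor r d q : ℝ) * (r.gcd q).gcd d = d / gcdCofactor q d r := by
    rw [eq_div_iff hα.ne']
    exact_mod_cast (mul_right_comm _ _ _).trans h.trd_eq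
  rw [hd]
  calc w q * (d / gcdCofactor q d r)
      ≤ w (gcdCofactor q d r) * w r * (d / gcdCofactor q d r) := by gcongr
    _ = d * w r * (w (gcdCofactor q d r) / gcdCofactor q d r) := by ring

theorem sum_fiber_weight_mul_card_denPair_le (hw : IsDivisorWeight w)
    (hB : ∀ b ∈ B, ∀ b' ∈ B, |b - b'| < 1) (hn : ∀ d, #{b ∈ B | b.den = d} ≤ n) {y : ℚ} {q d : ℕ}
    (h : LcmTriangle y.den q d) (hq : q ≠ 0) :
    ∑ b ∈ B with ((y + b).den, b.den) = (q, d),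
        w (y + b).den * (gcdCofactor y.den b.den (y + b).den *
          #{b' ∈ B | denPair (y + b) b' = (y.den, b.den)}) ≤
      d * n * w y.den * (w (gcdCofactor q d y.den) / gcdCofactor q d y.den) := by
  have hwq := hw.nonneg q
  calc ∑ b ∈ B with ((y + b).den, b.den) = (q, d),
        w (y + b).den * (gcdCofactor y.den b.den (y + b).den *
          #{b' ∈ B | denPair (y + b) b' = (y.den, b.den)} : ℝ)
      = w q * (gcdCofactor y.den d q * (∑ b ∈ B with ((y + b).den, b.den) = (q, d),
          #{b' ∈ B | denPair (y + b) b' = (y.den, d)} : ℕ)) := by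
        rw [Nat.cast_sum, mul_sum, mul_sum]
        refine sum_congr rfl fun b hb ↦ ?_
        obtain ⟨rfl, rfl⟩ := Prod.mk.inj (mem_filter.mp hb).2
        rfl
    _ ≤ w q * (gcdCofactor y.den d q * (n * (y.den.gcd q).gcd d : ℕ)) := by
        gcongr
        exact sum_card_denPair_le hB hn y q d
    _ = n * (w q * (gcdCofactor y.den d q * (y.den.gcd q).gcd d)) := by
        push_cast
        ring
    _ ≤ n * (d * w y.den * (w (gcdCofactor q d y.den) / gcdCofactor q d y.den)) :=
        mul_le_mul_of_nonneg_left (weight_mul_gcdCofactor_mul_gcd_le hw h y.den_nz hq)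
          n.cast_nonneg
    _ = d * n * w y.den * (w (gcdCofactor q d y.den) / gcdCofactor q d y.den) := by ring

theorem sum_weight_mul_card_denPair_le (hw : IsDivisorWeight w)
    (hB : ∀ b ∈ B, ∀ b' ∈ B, |b - b'| < 1) (hden : ∀ b ∈ B, b.den ≤ Q)
    (hn : ∀ d, #{b ∈ B | b.den = d} ≤ n) (y : ℚ) :
    ∑ b ∈ B, w (y + b).den * (gcdCofactor y.den b.den (y + b).den *
        #{b' ∈ B | denPair (y + b) b' = (y.den, b.den)}) ≤
      Q * n * (w y.den * tau3 y.den) * ∑ a ∈ Icc 1 Q, w a / a := by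
  set K := B.image fun b ↦ ((y + b).den, b.den) with hK_def
  have hK : ∀ p ∈ K, LcmTriangle y.den p.1 p.2 ∧ p.1 ≠ 0 ∧ p.2 ∈ Icc 1 Q := by
    simp only [hK_def, forall_mem_image, mem_Icc]
    intro b hb
    have h := lcmTriangle_den (y + b) b
    rw [add_sub_cancel_right] at h
    exact ⟨h.swap, (y + b).den_nz, b.pos, hden b hb⟩
  have hwy := hw.nonneg y.den
  have hFnn (a : ℕ) : 0 ≤ w a / a := div_nonneg (hw.nonneg a) a.cast_nonneg
  rw [← sum_fiberwise_of_maps_to (t := K) fun b hb ↦ mem_image_of_mem _ hb]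
  calc _ ≤ ∑ p ∈ K, Q * n * w y.den *
          (w (gcdCofactor p.1 p.2 y.den) / gcdCofactor p.1 p.2 y.den) := by
        refine sum_le_sum fun p hp ↦ ?_
        obtain ⟨h, hp1, hp2⟩ := hK p hp
        refine (sum_fiber_weight_mul_card_denPair_le hw hB hn h hp1).trans ?_
        have := hFnn (gcdCofactor p.1 p.2 y.den)
        gcongr
        exact (mem_Icc.mp hp2).2
    _ ≤ Q * n * w y.den * (tau3 y.den * ∑ a ∈ Icc 1 Q, w a / a) := by
        rw [← mul_sum]
        gcongr
        exact sum_gcdCofactor_le (F := fun a ↦ w a / a) y.den_nz (fun p hp ↦ (hK p hp).1)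
          (fun p hp ↦ (hK p hp).2.2) hFnn
    _ = Q * n * (w y.den * tau3 y.den) * ∑ a ∈ Icc 1 Q, w a / a := by ring

theorem finsum_weight_mul_sq_sum_sub_le (hw : IsDivisorWeight w)
    (hB : ∀ b ∈ B, ∀ b' ∈ B, |b - b'| < 1) (hden : ∀ b ∈ B, b.den ≤ Q)
    (hn : ∀ d, #{b ∈ B | b.den = d} ≤ n) {f : ℚ → ℝ} (hf : HasFiniteSupport f) :
    ∑ᶠ x : ℚ, w x.den * (∑ b ∈ B, f (x - b)) ^ 2 ≤
      (∑ c ∈ Icc 1 Q, 1 / (c : ℝ)) * (Q * n * ∑ a ∈ Icc 1 Q, w a * tau3 a / a) *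
        ∑ᶠ y : ℚ, w y.den * tau3 y.den ^ 2 * f y ^ 2 := by
  set H : ℝ := ∑ c ∈ Icc 1 Q, 1 / (c : ℝ)
  set A : ℝ := ∑ a ∈ Icc 1 Q, w a * tau3 a / a
  have hwτ := hw.mul isDivisorWeight_tau3
  let G (y b : ℚ) : ℝ := w (y + b).den * tau3 (y + b).den * (gcdCofactor y.den b.den (y + b).den *
    #{b' ∈ B | denPair (y + b) b' = (y.den, b.den)}) * f y ^ 2
  have finite_mul_sq {g : ℚ → ℝ} (hg : HasFiniteSupport g) (c : ℚ → ℝ) :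
      HasFiniteSupport fun x ↦ c x * g x ^ 2 := by
    fun_prop (disch := norm_num)
  have hG (b : ℚ) : HasFiniteSupport (G · b) := finite_mul_sq hf _
  have hGsub (b : ℚ) : HasFiniteSupport fun x ↦ G (x - b) b :=
    (hG b).fun_comp_of_injective sub_left_injective
  have hfsum : HasFiniteSupport fun x ↦ ∑ b ∈ B, f (x - b) :=
    .sum (fun b ↦ hf.fun_comp_of_injective sub_left_injective) B
  have row (x : ℚ) : w x.den * (∑ b ∈ B, f (x - b)) ^ 2 ≤ H * ∑ b ∈ B, G (x - b) b := by
    calc _ ≤ w x.den * ((tau3 x.den * H) * _) :=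
          mul_le_mul_of_nonneg_left (sq_sum_sub_le_sum_card_denPair hden f x) (hw.nonneg _)
      _ = H * ∑ b ∈ B, G (x - b) b := by
          simp only [G, sub_add_cancel, mul_sum]
          exact sum_congr rfl fun b _ ↦ by unfold denPair; ring
  have column (y : ℚ) : ∑ b ∈ B, G y b ≤ Q * n * A * (w y.den * tau3 y.den ^ 2 * f y ^ 2) := by
    simp only [G, ← sum_mul]
    refine (mul_le_mul_of_nonneg_right (sum_weight_mul_card_denPair_le hwτ hB hden hn y)
      (sq_nonneg _)).trans_eq ?_
    ring
  calc ∑ᶠ x : ℚ, w x.den * (∑ b ∈ B, f (x - b)) ^ 2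
      ≤ ∑ᶠ x, H * ∑ b ∈ B, G (x - b) b :=
        finsum_le_finsum' (finite_mul_sq hfsum _) (.fun_mul_right _ (.sum hGsub B)) row
    _ = H * ∑ᶠ y, ∑ b ∈ B, G y b := by rw [← mul_finsum, finsum_sum_comp_sub B fun b _ ↦ hG b]
    _ ≤ H * ∑ᶠ y, Q * n * A * (w y.den * tau3 y.den ^ 2 * f y ^ 2) :=
        mul_le_mul_of_nonneg_left
          (finsum_le_finsum' (.sum hG B) (.fun_mul_right _ (finite_mul_sq hf _)) column)
          (sum_nonneg fun c _ ↦ by positivity)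
    _ = H * (Q * n * A) * ∑ᶠ y : ℚ, w y.den * tau3 y.den ^ 2 * f y ^ 2 := by
        rw [← mul_finsum, mul_assoc H]

end Convolution

theorem mem_Qeq {q : ℕ} {b : ℚ} : b ∈ Qeq q ↔ b.den = q ∧ 0 < b ∧ b ≤ 1 := by
  simp only [Qeq, mem_image, mem_filter, mem_Icc]
  constructor
  · rintro ⟨a, ⟨⟨ha, haq⟩, hcop⟩, rfl⟩
    have hq : (0 : ℚ) < q := by exact_mod_cast ha.trans haq
    have hden := Rat.den_div_eq_of_coprime (a := a) (b := q) (by exact_mod_cast hq) hcop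
    exact ⟨Nat.cast_injective hden, div_pos (by exact_mod_cast ha) hq,
      div_le_one_of_le₀ (by exact_mod_cast haq) hq.le⟩
  · rintro ⟨rfl, h0, h1⟩
    have hnum : (b.num.natAbs : ℤ) = b.num := Int.natAbs_of_nonneg (Rat.num_nonneg.mpr h0.le)
    refine ⟨b.num.natAbs, ⟨⟨?_, ?_⟩, b.reduced⟩, ?_⟩
    · exact Int.natAbs_pos.mpr (Rat.num_pos.mpr h0).ne'
    · zify
      rw [abs_of_pos (Rat.num_pos.mpr h0)]
      exact Rat.num_le_denom_iff.mpr h1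
    · rw [← Int.cast_natCast, hnum, Rat.num_div_den]

theorem mem_Qle {Q : ℕ} {b : ℚ} : b ∈ Qle Q ↔ b.den ≤ Q ∧ 0 < b ∧ b ≤ 1 := by
  simp [Qle, mem_Qeq, Nat.one_le_iff_ne_zero]

theorem card_filter_den_eq_le {B : Finset ℚ} {Q n : ℕ} (hB : B ⊆ Qle Q)
    (hn : ∀ q, 1 ≤ q → q ≤ Q → #(B ∩ Qeq q) ≤ n) (d : ℕ) : #{b ∈ B | b.den = d} ≤ n := by
  by_cases hd : 1 ≤ d ∧ d ≤ Q
  · refine (card_le_card fun b hb ↦ ?_).trans (hn d hd.1 hd.2)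
    obtain ⟨hb, hbd⟩ := mem_filter.mp hb
    exact mem_inter.mpr ⟨hb, mem_Qeq.mpr ⟨hbd, (mem_Qle.mp (hB hb)).2⟩⟩
  · rw [filter_eq_empty_iff.mpr, card_empty]
    · exact n.zero_le
    · rintro b hb rfl
      exact hd ⟨b.pos, (mem_Qle.mp (hB hb)).1⟩

theorem rB_succ (B : Finset ℚ) (i : ℕ) (x : ℚ) : rB B (i + 1) x = ∑ b ∈ B, rB B i (x - b) := by
  simp only [rB]
  rw [← card_sigma]
  refine card_nbij' (fun f ↦ ⟨f 0, Fin.tail f⟩) (fun p ↦ Fin.cons p.1 p.2) ?_ ?_ ?_ ?_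
  · intro f hf
    simp_all [Fin.sum_univ_succ, Fin.tail, eq_sub_iff_add_eq']
  · rintro ⟨b, f⟩ hf
    simp_all [Fin.sum_univ_succ, Fin.forall_fin_succ]
  · exact fun f _ ↦ Fin.cons_self_tail f
  · exact fun p _ ↦ by simp

theorem hasFiniteSupport_rB (B : Finset ℚ) (i : ℕ) : HasFiniteSupport (rB B i) := by
  refine ((Fintype.piFinset fun _ : Fin i ↦ B).image fun f ↦ ∑ j, f j).finite_toSet.subset ?_
  intro x hx
  obtain ⟨f, hf⟩ := card_ne_zero.mp (mem_support.mp hx)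
  exact mem_image.mpr ⟨f, mem_filter.mp hf⟩

theorem le_MlogAvg (w : ℕ → ℝ) {x X : ℕ} (hx : x ∈ Icc 2 X) :
    (∑ n ∈ Icc 1 x, w n / n) / Real.log x ≤ MlogAvg w X := by
  refine le_ciSup₂ (f := fun x _ ↦ (∑ n ∈ Icc 1 x, w n / n) / Real.log x) ?_ x hx
  refine ((Icc 2 X).finite_toSet.image fun x ↦ (∑ n ∈ Icc 1 x, w n / n) / Real.log x).bddAbove.mono
    (Set.iUnion_subset fun x ↦ Set.range_subset_iff.mpr fun hx ↦ Set.mem_image_of_mem _ hx)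

theorem MlogAvg_nonneg {w : ℕ → ℝ} (hw : ∀ n, 0 ≤ w n) (X : ℕ) : 0 ≤ MlogAvg w X :=
  Real.iSup_nonneg fun x ↦ Real.iSup_nonneg fun _ ↦
    div_nonneg (sum_nonneg fun n _ ↦ div_nonneg (hw n) n.cast_nonneg) (Real.log_natCast_nonneg x)

theorem MlogAvg_mono {v w : ℕ → ℝ} (hw : ∀ n, 0 ≤ w n) (hvw : ∀ n, n ≠ 0 → v n ≤ w n) (X : ℕ) :
    MlogAvg v X ≤ MlogAvg w X := by
  have hM := MlogAvg_nonneg hw X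
  refine Real.iSup_le (fun x ↦ Real.iSup_le (fun hx ↦ le_trans ?_ (le_MlogAvg w hx)) hM) hM
  refine div_le_div_of_nonneg_right (sum_le_sum fun n hn ↦ ?_) (Real.log_natCast_nonneg x)
  have := hvw n (Nat.one_le_iff_ne_zero.mp (mem_Icc.mp hn).1)
  gcongr

theorem MlogAvg_tau3_pow_mono (X : ℕ) :
    Monotone fun s : ℕ ↦ MlogAvg (fun k ↦ (tau3 k : ℝ) ^ s) X := fun _ _ hst ↦
  MlogAvg_mono (fun _ ↦ by positivity)
    (fun _ hk ↦ pow_le_pow_right₀ (by exact_mod_cast one_le_tau3 hk) hst) X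

theorem sum_div_le_log_mul_MlogAvg (w : ℕ → ℝ) {X : ℕ} (hX : 2 ≤ X) :
    ∑ n ∈ Icc 1 X, w n / n ≤ Real.log X * MlogAvg w X := by
  rw [← div_le_iff₀' (Real.log_pos (by exact_mod_cast hX))]
  exact le_MlogAvg w (mem_Icc.mpr ⟨hX, le_rfl⟩)

theorem sum_one_div_le_three_mul_log {Q : ℕ} (hQ : 2 ≤ Q) :
    ∑ c ∈ Icc 1 Q, 1 / (c : ℝ) ≤ 3 * Real.log Q := by
  have hharm := harmonic_le_one_add_log Q
  have hlog : Real.log 2 ≤ Real.log Q := Real.log_le_log two_pos (by exact_mod_cast hQ)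
  simp only [harmonic_eq_sum_Icc, Rat.cast_sum, Rat.cast_inv, Rat.cast_natCast] at hharm
  simp only [one_div]
  linarith [Real.log_two_gt_d9]

theorem statement_5_general {Q n : ℕ} (hQ : 2 ≤ Q) {B : Finset ℚ} (hB : B ⊆ Qle Q)
    (hn : ∀ q, 1 ≤ q → q ≤ Q → #(B ∩ Qeq q) ≤ n) (s i : ℕ) :
    ∑ᶠ x : ℚ, (tau3 x.den : ℝ) ^ s * (rB B (i + 1) x : ℝ) ^ 2 ≤
      3 * Real.log Q ^ 2 * (Q * n) * MlogAvg (fun k ↦ (tau3 k : ℝ) ^ (s + 1)) Q *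
        ∑ᶠ x : ℚ, (tau3 x.den : ℝ) ^ (s + 2) * (rB B i x : ℝ) ^ 2 := by
  have hdiff : ∀ b ∈ B, ∀ b' ∈ B, |b - b'| < 1 := fun b hb b' hb' ↦ by
    have h := mem_Qle.mp (hB hb)
    have h' := mem_Qle.mp (hB hb')
    exact abs_sub_lt_iff.mpr ⟨by linarith, by linarith⟩
  have hfin : HasFiniteSupport fun x ↦ (rB B i x : ℝ) :=
    (hasFiniteSupport_rB B i).fun_comp Nat.cast_zero
  have hconv := finsum_weight_mul_sq_sum_sub_le (isDivisorWeight_tau3.pow s) hdiff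
    (fun b hb ↦ (mem_Qle.mp (hB hb)).1) (card_filter_den_eq_le hB hn) hfin
  simp only [← Nat.cast_sum, ← rB_succ, ← pow_succ, ← pow_add] at hconv
  have hS : 0 ≤ ∑ᶠ x : ℚ, (tau3 x.den : ℝ) ^ (s + 2) * (rB B i x : ℝ) ^ 2 :=
    finsum_nonneg fun x ↦ by positivity
  refine hconv.trans ?_
  calc _ ≤ 3 * Real.log Q *
          (Q * n * (Real.log Q * MlogAvg (fun k ↦ (tau3 k : ℝ) ^ (s + 1)) Q)) * _ := by
        gcongr
        · exact sum_one_div_le_three_mul_log hQ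
        · exact sum_div_le_log_mul_MlogAvg _ hQ
    _ = _ := by ring

theorem log_sq_le_mul_log_pow_three {m Q : ℕ} (hm : 2 ≤ m) (hQ : 2 ≤ Q) :
    Real.log Q ^ 2 ≤ (m * Real.log Q) ^ 3 := by
  have hlog : Real.log 2 ≤ Real.log Q := Real.log_le_log two_pos (by exact_mod_cast hQ)
  have hm' : (2 : ℝ) ≤ m := by exact_mod_cast hm
  have hL : 1 ≤ m * Real.log Q := by nlinarith [Real.log_two_gt_d9]
  calc Real.log Q ^ 2 ≤ (m * Real.log Q) ^ 2 := by
        gcongr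
        nlinarith [Real.log_two_gt_d9]
    _ ≤ (m * Real.log Q) ^ 3 := pow_le_pow_right₀ hL (by norm_num)

theorem statement_5 :
    ∃ C > (0 : ℝ), ∀ m Q n t j : ℕ, 2 ≤ m → 2 ≤ Q → 1 ≤ n → 1 ≤ t → 1 ≤ j → j ≤ m →
      ∀ B : Finset ℚ, B ⊆ Qle Q → (∀ b ∈ B, 0 < b ∧ b < 1 / (m : ℚ)) →
        (∀ q : ℕ, 1 ≤ q → q ≤ Q → (B ∩ Qeq q).card ≤ n) →
        (∑ᶠ x : ℚ, (tau3 x.den : ℝ) ^ (2 * t) * (rB B j x : ℝ) ^ 2) ≤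
          C * ((m : ℝ) * Real.log Q) ^ 3 * ((Q : ℝ) * n) *
            MlogAvg (fun k => (tau3 k : ℝ) ^ (2 * t + 2)) Q *
            ∑ᶠ x : ℚ, (tau3 x.den : ℝ) ^ (2 * t + 2) * (rB B (j - 1) x : ℝ) ^ 2 := by
  refine ⟨3, by norm_num, fun m Q n t j hm hQ _ _ hj _ B hB _ hn ↦ ?_⟩
  obtain ⟨i, rfl⟩ := Nat.exists_eq_add_of_le' hj
  have hM := MlogAvg_nonneg (w := fun k ↦ (tau3 k : ℝ) ^ (2 * t + 1)) (fun _ ↦ by positivity) Q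
  refine (statement_5_general hQ hB hn (2 * t) i).trans
    (mul_le_mul_of_nonneg_right ?_ (finsum_nonneg fun x ↦ by positivity))
  gcongr 3 * ?_ * _ * ?_
  · exact log_sq_le_mul_log_pow_three hm hQ
  · exact MlogAvg_tau3_pow_mono Q (Nat.le_succ _)
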